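/- Let q be a prime power, let n > 1 be an integer, let d_1, …, d_k be distinct divisors of n, and let (β_1, …, β_k) be a tuple with β_i ∈ F_{q^{d_i}} for each i. Assume that Tr_{d_i/gcd(d_i,d_j)}(β_i) = Tr_{d_j/gcd(d_i,d_j)}(β_j) for all 1 ≤ i < j ≤ k. Then the number of elements α ∈ F_{q^n} satisfying Tr_{n/d_i}(α) = β_i for all 1 ≤ i ≤ k equals q^{n − λ(d_1, …, d_k)}, where λ(d_1, …, d_k) = ∑_{i=1}^k d_i + ∑_{j=2}^k (−1)^{j+1} ∑_{1 ≤ i_1 < ⋯ < i_j ≤ k} gcd(d_{i_1}, …, d_{i_j}). -/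

import Mathlib

open Polynomial

/-- The trace map `Tr_{n/m} : F_{q^n} → F_{q^m}`, `Tr_{n/m}(α) = ∑_{j=0}^{n/m-1} α^{q^{mj}}`,
viewed as a function on the algebraic closure of `F` (where `q = Fintype.card F`). -/
noncomputable def trMap (F : Type*) [Field F] [Fintype F] (n m : ℕ)
    (α : AlgebraicClosure F) : AlgebraicClosure F :=
  ∑ j ∈ Finset.range (n / m), α ^ (Fintype.card F) ^ (m * j)

/-- `λ(d₁, …, d_k) = ∑ dᵢ + ∑_{j=2}^{k} (-1)^{j+1} ∑_{1 ≤ i₁ < ⋯ < i_j ≤ k} gcd(d_{i₁}, …, d_{i_j})`. -/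
def lambdaSum {k : ℕ} (d : Fin k → ℕ) : ℤ :=
  (∑ i, (d i : ℤ)) + ∑ j ∈ Finset.Icc 2 k, (-1 : ℤ) ^ (j + 1) *
    ∑ s ∈ Finset.powersetCard j (Finset.univ : Finset (Fin k)), ((s.gcd d : ℕ) : ℤ)


theorem aux_exist {R M ι : Type*} [CommRing R] [IsDomain R] [IsPrincipalIdealRing R]
    [AddCommGroup M] [Module R M] [Fintype ι] (hdiv : ∀ r : R, r ≠ 0 → ∀ m : M, ∃ x, r • x = m)
    (g : ι → R) (i₀ : ι) (hg : g i₀ ≠ 0) (β : ι → M)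
    (hc : ∀ i j a b, a * g i = b * g j → a • β i = b • β j) :
    ∃ x, ∀ i, g i • x = β i := by
  obtain ⟨G, hG⟩ := IsPrincipalIdealRing.principal (Ideal.span (Set.range g))
  have hG' : Ideal.span (Set.range g) = Ideal.span {G} := hG
  have h1 : ∀ i, ∃ a, g i = G * a := by
    intro i
    have : g i ∈ Ideal.span {G} := hG' ▸ Ideal.subset_span (Set.mem_range_self i)
    exact Ideal.mem_span_singleton.1 this
  choose a ha using h1
  have hG0 : G ≠ 0 := by
    rintro rfl
    exact hg (by simp [ha i₀])
  have h2 : G ∈ Ideal.span (Set.range g) := hG' ▸ Ideal.mem_span_singleton_self G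
  obtain ⟨c, hcc⟩ := Ideal.mem_span_range_iff_exists_fun.1 h2
  have h3 : ∑ i, c i * a i = 1 := by
    apply mul_left_cancel₀ hG0
    rw [mul_one, Finset.mul_sum]
    conv_rhs => rw [← hcc]
    refine Finset.sum_congr rfl fun i _ => ?_
    rw [ha i]; ring
  obtain ⟨x, hx⟩ := hdiv G hG0 (∑ j, c j • β j)
  refine ⟨x, fun i => ?_⟩
  rw [ha i, mul_comm, mul_smul, hx, Finset.smul_sum]
  have : ∀ j, a i • c j • β j = (c j * a j) • β i := by
    intro j
    rw [smul_comm, mul_smul, hc j i (a i) (a j)]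
    rw [ha i, ha j]; ring
  simp_rw [this]
  rw [← Finset.sum_smul, h3, one_smul]

/-- distributivity: if `x ∣ L = lcm f i` and `L'` is a common multiple of all common divisors of `x` and `f i`. -/
theorem aux_distrib {R ι : Type*} [EuclideanDomain R] [DecidableEq R]
    (s : Finset ι) (f : ι → R) (L L' x : R) (hL0 : L ≠ 0)
    (hL : ∀ m, L ∣ m ↔ ∀ i ∈ s, f i ∣ m) (hx : x ∣ L)
    (hL' : ∀ i ∈ s, ∀ y, y ∣ x → y ∣ f i → y ∣ L') : x ∣ L' := by
  let J : Ideal R := Submodule.comap (LinearMap.mulLeft R L') (Ideal.span {x})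
  have hJ : ∀ r, r ∈ J ↔ x ∣ L' * r := by
    intro r
    simp [J, Ideal.mem_span_singleton]
  obtain ⟨ρ, hρ⟩ := IsPrincipalIdealRing.principal J
  have hρ' : ∀ r, r ∈ J ↔ ρ ∣ r := by
    intro r; rw [hρ]; exact Ideal.mem_span_singleton
  have hx0 : x ≠ 0 := by rintro rfl; exact hL0 (zero_dvd_iff.1 hx)
  obtain ⟨t, ht⟩ : ρ ∣ L := (hρ' _).1 ((hJ _).2 (hx.mul_left _))
  have ht0 : t ≠ 0 := by rintro rfl; simp at ht; exact hL0 ht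
  have hρ0 : ρ ≠ 0 := by rintro rfl; simp at ht; exact hL0 ht
  have key : L ∣ t := by
    rw [hL]
    intro i hi
    obtain ⟨w, hw⟩ := (hL L).1 dvd_rfl i hi
    set γ := EuclideanDomain.gcd x (f i) with hγ
    obtain ⟨r, hr⟩ := EuclideanDomain.gcd_dvd_left x (f i)
    obtain ⟨e, he⟩ := EuclideanDomain.gcd_dvd_right x (f i)
    rw [← hγ] at hr he
    have hγ0 : γ ≠ 0 := by intro h; rw [h, zero_mul] at hr; exact hx0 hr
    have hrJ : ρ ∣ r := by
      rw [← hρ', hJ]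
      have : γ ∣ L' := hL' i hi γ (EuclideanDomain.gcd_dvd_left _ _) (EuclideanDomain.gcd_dvd_right _ _)
      conv_lhs => rw [hr]
      exact mul_dvd_mul_right this r
    have hcop : IsCoprime r e := by
      have hb := EuclideanDomain.gcd_eq_gcd_ab x (f i)
      rw [← hγ] at hb
      refine ⟨EuclideanDomain.gcdA x (f i), EuclideanDomain.gcdB x (f i), ?_⟩
      apply mul_left_cancel₀ hγ0
      rw [mul_one]
      conv_rhs => rw [hb]
      conv_rhs => enter [1,1]; rw [hr]
      conv_rhs => enter [2,1]; rw [he]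
      ring
    have hrw : r ∣ w := by
      apply hcop.dvd_of_dvd_mul_left
      apply (mul_dvd_mul_iff_left hγ0).1
      rw [← hr, ← mul_assoc, ← he, ← hw]; exact hx
    obtain ⟨w', hw'⟩ := hrJ.trans hrw
    refine ⟨w', mul_left_cancel₀ hρ0 ?_⟩
    rw [← ht, hw, hw']; ring
  obtain ⟨e, he⟩ := key
  have h1 : ρ * e = 1 := by
    apply mul_left_cancel₀ ht0
    rw [mul_one]
    conv_rhs => rw [he, ht]
    ring
  have : (1:R) ∈ J := (hρ' 1).2 ⟨e, h1.symm⟩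
  simpa using (hJ 1).1 this

theorem aux_gcd {F : Type*} [Field F] (x : F[X]) (a b : ℕ) (ha : x ∣ X ^ a - 1) (hb : x ∣ X ^ b - 1) :
    x ∣ X ^ (Nat.gcd a b) - 1 := by
  rw [← Ideal.mem_span_singleton, ← Ideal.Quotient.eq_zero_iff_mem] at *
  simp only [map_sub, map_pow, map_one, sub_eq_zero] at *
  exact pow_gcd_eq_one.2 ⟨ha, hb⟩

/-- alternating gcd sum -/
def altGcd {ι : Type*} (s : Finset ι) (d : ι → ℕ) : ℤ :=
  - ∑ t ∈ s.powerset, (-1 : ℤ) ^ t.card * ((t.gcd d : ℕ) : ℤ)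

theorem altGcd_insert {ι : Type*} [DecidableEq ι] (s : Finset ι) (a : ι) (ha : a ∉ s) (d : ι → ℕ) :
    altGcd (insert a s) d = altGcd s d + d a - altGcd s (fun i => Nat.gcd (d i) (d a)) := by
  unfold altGcd
  rw [Finset.sum_powerset_insert ha]
  have h1 : ∑ t ∈ s.powerset, (-1 : ℤ) ^ (insert a t).card * (((insert a t).gcd d : ℕ) : ℤ)
      = - ∑ t ∈ s.powerset, ((-1 : ℤ) ^ t.card * (((t.gcd fun i => Nat.gcd (d i) (d a)) : ℕ) : ℤ)
        + if t = ∅ then (d a : ℤ) else 0) := by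
    rw [← Finset.sum_neg_distrib]
    refine Finset.sum_congr rfl fun t ht => ?_
    have hat : a ∉ t := fun h => ha (Finset.mem_powerset.1 ht h)
    rw [Finset.card_insert_of_notMem hat, Finset.gcd_insert]
    rcases t.eq_empty_or_nonempty with rfl | hne
    · simp
    · have : (t.gcd fun i => Nat.gcd (d i) (d a)) = gcd (d a) (t.gcd d) := by
        apply Nat.dvd_antisymm
        · obtain ⟨i, hi⟩ := hne
          apply dvd_gcd
          · exact (Finset.gcd_dvd hi).trans (Nat.gcd_dvd_right _ _)
          · exact Finset.dvd_gcd fun j hj => (Finset.gcd_dvd hj).trans (Nat.gcd_dvd_left _ _)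
        · exact Finset.dvd_gcd fun j hj => Nat.dvd_gcd ((gcd_dvd_right _ _).trans (Finset.gcd_dvd hj)) (gcd_dvd_left _ _)
      rw [this, if_neg hne.ne_empty, pow_succ]
      ring
  rw [h1, Finset.sum_add_distrib, Finset.sum_ite_eq']
  simp
  ring

theorem aux_lcm {F ι : Type*} [Field F] (s : Finset ι) : ∀ (d : ι → ℕ) (_ : ∀ i, d i ≠ 0),
    ∃ L : F[X], L ≠ 0 ∧ (∀ m, L ∣ m ↔ ∀ i ∈ s, (X ^ d i - 1 : F[X]) ∣ m) ∧
      (L.natDegree : ℤ) = altGcd s d := by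
  classical
  induction s using Finset.induction_on with
  | empty => intro d hd; exact ⟨1, one_ne_zero, by simp, by simp [altGcd]⟩
  | insert a s ha ih =>
    intro d hd
    obtain ⟨L, hL0, hL, hLd⟩ := ih d hd
    obtain ⟨L', hL0', hL', hLd'⟩ := ih (fun i => Nat.gcd (d i) (d a))
      (fun i => Nat.gcd_ne_zero_left (hd i))
    have hfa : (X ^ d a - 1 : F[X]) ≠ 0 := (monic_X_pow_sub_C (1:F) (hd a)).ne_zero
    have hass : EuclideanDomain.gcd (X ^ d a - 1) L ∣ L' := by
      apply aux_distrib s (fun i => (X ^ d i - 1 : F[X])) L L' _ hL0 hL (EuclideanDomain.gcd_dvd_right _ _)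
      intro i hi y hy hyi
      exact (aux_gcd y _ _ hyi (hy.trans (EuclideanDomain.gcd_dvd_left _ _))).trans
        ((hL' L').1 dvd_rfl i hi)
    have hpow : ∀ a b : ℕ, a ∣ b → (X ^ a - 1 : F[X]) ∣ X ^ b - 1 := by
      rintro a _ ⟨c, rfl⟩
      simpa [pow_mul] using sub_dvd_pow_sub_pow (X ^ a : F[X]) 1 c
    have hass' : L' ∣ EuclideanDomain.gcd (X ^ d a - 1) L := by
      apply EuclideanDomain.dvd_gcd
      · rw [hL']; intro i hi; exact hpow _ _ (Nat.gcd_dvd_right _ _)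
      · rw [hL']; intro i hi
        exact (hpow _ _ (Nat.gcd_dvd_left _ _)).trans ((hL L).1 dvd_rfl i hi)
    have hprod := EuclideanDomain.gcd_mul_lcm (X ^ d a - 1 : F[X]) L
    have hne : EuclideanDomain.gcd (X ^ d a - 1 : F[X]) L * EuclideanDomain.lcm (X ^ d a - 1 : F[X]) L ≠ 0 := by
      rw [hprod]; exact mul_ne_zero hfa hL0
    have hg0 := left_ne_zero_of_mul hne
    have hl0 := right_ne_zero_of_mul hne
    have hdeg := congrArg natDegree hprod
    rw [natDegree_mul hg0 hl0, natDegree_mul hfa hL0,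
      le_antisymm (natDegree_le_of_dvd hass hL0') (natDegree_le_of_dvd hass' hg0)] at hdeg
    have hfd : (X ^ d a - 1 : F[X]).natDegree = d a := natDegree_X_pow_sub_C (r := (1:F))
    refine ⟨EuclideanDomain.lcm (X ^ d a - 1) L, hl0, ?_, ?_⟩
    · intro m
      rw [EuclideanDomain.lcm_dvd_iff, hL, Finset.forall_mem_insert]
    · rw [altGcd_insert s a ha, ← hLd, ← hLd']
      omega

theorem lambda_eq {k : ℕ} (d : Fin k → ℕ) : lambdaSum d = altGcd Finset.univ d := by
  unfold lambdaSum altGcd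
  rw [Finset.sum_powerset, Finset.card_univ, Fintype.card_fin]
  have h : ∀ j ∈ Finset.range (k+1), ∑ t ∈ Finset.powersetCard j (Finset.univ : Finset (Fin k)),
     (-1 : ℤ) ^ t.card * ((t.gcd d : ℕ) : ℤ) = (-1) ^ j * ∑ t ∈ Finset.powersetCard j (Finset.univ : Finset (Fin k)), ((t.gcd d : ℕ) : ℤ) := by
    intro j _
    rw [Finset.mul_sum]
    refine Finset.sum_congr rfl fun t ht => ?_
    rw [(Finset.mem_powersetCard.1 ht).2]
  rw [Finset.sum_congr rfl h]
  rcases k with _ | k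
  · simp
  · rw [Finset.sum_range_succ', Finset.sum_range_succ', Finset.range_eq_Ico, Finset.sum_Ico_add' (fun j => (-1:ℤ) ^ j * ∑ t ∈ Finset.powersetCard j (Finset.univ : Finset (Fin (k+1))), ((t.gcd d : ℕ) : ℤ)) 0 k 2]
    have : Finset.Icc 2 (k+1) = Finset.Ico (0+2) (k+2) := by ext; simp; omega
    rw [this]
    simp [Finset.powersetCard_one, pow_succ]

/-- the linearized polynomial attached to `f`. -/
noncomputable def linPoly (F : Type*) [Field F] [Fintype F] (f : F[X]) : (AlgebraicClosure F)[X] :=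
  ∑ i ∈ Finset.range (f.natDegree + 1),
    C (algebraMap F (AlgebraicClosure F) (f.coeff i)) * X ^ (Fintype.card F ^ i)

/-- Frobenius as a linear endomorphism -/
noncomputable def frobEnd (F : Type*) [Field F] [Fintype F] :
    Module.End F (AlgebraicClosure F) :=
  (FiniteField.frobeniusAlgHom F (AlgebraicClosure F)).toLinearMap

theorem frobEnd_pow (F : Type*) [Field F] [Fintype F] (i : ℕ) (x : AlgebraicClosure F) :
    (frobEnd F ^ i) x = x ^ (Fintype.card F ^ i) := by
  induction i with
  | zero => simp
  | succ i ih =>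
    rw [pow_succ', Module.End.mul_apply, ih, pow_succ, pow_mul]
    rfl

theorem linPoly_eval (F : Type*) [Field F] [Fintype F] (f : F[X]) (x : AlgebraicClosure F) :
    (linPoly F f).eval x = aeval (frobEnd F) f x := by
  rw [aeval_eq_sum_range, linPoly, eval_finset_sum, LinearMap.sum_apply]
  refine Finset.sum_congr rfl fun i _ => ?_
  rw [LinearMap.smul_apply, frobEnd_pow, Algebra.smul_def]
  simp

theorem linPoly_natDegree (F : Type*) [Field F] [Fintype F] (f : F[X]) (hf : f ≠ 0) :
    (linPoly F f).natDegree = Fintype.card F ^ f.natDegree := by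
  have hc : 1 < Fintype.card F := Fintype.one_lt_card
  apply natDegree_eq_of_le_of_coeff_ne_zero
  · refine natDegree_sum_le_of_forall_le _ _ fun i hi => ?_
    refine (natDegree_C_mul_X_pow_le _ _).trans ?_
    exact Nat.pow_le_pow_right hc.le (by simpa [Nat.lt_succ_iff] using hi)
  · rw [linPoly, finset_sum_coeff]
    rw [Finset.sum_eq_single f.natDegree]
    · simp [hf]
    · intro b _ hb
      rw [coeff_C_mul_X_pow, if_neg]
      intro h
      exact hb (Nat.pow_right_injective hc h).symm
    · simp

theorem linPoly_derivative (F : Type*) [Field F] [Fintype F] (f : F[X]) :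
    derivative (linPoly F f) = C (algebraMap F (AlgebraicClosure F) (f.coeff 0)) := by
  rw [linPoly, derivative_sum, Finset.sum_range_succ', Finset.sum_eq_zero]
  · simp
  · intro i _
    have : ((Fintype.card F : ℕ) : AlgebraicClosure F) = 0 := by
      rw [← map_natCast (algebraMap F (AlgebraicClosure F)), FiniteField.cast_card_eq_zero, map_zero]
    simp [derivative_X_pow, this]

theorem frob_surj (F : Type*) [Field F] [Fintype F] (f : F[X]) (hf : f ≠ 0)
    (m : AlgebraicClosure F) : ∃ x, aeval (frobEnd F) f x = m := by
  have hd : (linPoly F f - C m).natDegree = Fintype.card F ^ f.natDegree := by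
    rw [natDegree_sub_C, linPoly_natDegree F f hf]
  have hpos : 0 < Fintype.card F ^ f.natDegree := pow_pos Fintype.card_pos _
  obtain ⟨x, hx⟩ := IsAlgClosed.exists_root (linPoly F f - C m) (by
    intro h
    have h0 : (linPoly F f - C m).natDegree = 0 := natDegree_eq_zero_iff_degree_le_zero.2 h.le
    rw [h0] at hd
    exact hpos.ne hd)
  refine ⟨x, ?_⟩
  rw [← linPoly_eval]
  simpa [IsRoot, sub_eq_zero] using hx

theorem frob_ker (F : Type*) [Field F] [Fintype F] (f : F[X]) (hf : f.coeff 0 ≠ 0) :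
    Nat.card {x : AlgebraicClosure F // aeval (frobEnd F) f x = 0} =
      Fintype.card F ^ f.natDegree := by
  have hf0 : f ≠ 0 := by rintro rfl; simp at hf
  have hsep : (linPoly F f).Separable := by
    rw [Polynomial.separable_def, linPoly_derivative]
    have hu : IsUnit (C (algebraMap F (AlgebraicClosure F) (f.coeff 0))) := by
      rw [isUnit_C]
      simpa using hf
    obtain ⟨v, hv⟩ := hu.exists_right_inv
    exact ⟨0, v, by rw [zero_mul, zero_add, mul_comm, hv]⟩
  have hp0 : linPoly F f ≠ 0 := hsep.ne_zero
  have h := card_rootSet_eq_natDegree (K := AlgebraicClosure F) hsep (IsAlgClosed.splits _)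
  rw [← linPoly_natDegree F f hf0, ← h, ← Nat.card_eq_fintype_card]
  refine Nat.card_congr (Equiv.subtypeEquivRight fun x => ?_)
  rw [mem_rootSet_of_ne hp0, ← linPoly_eval]
  simp

/-- the polynomial `(X^n-1)/(X^m-1)` -/
noncomputable def trPoly (F : Type*) [Field F] (n m : ℕ) : F[X] :=
  ∑ j ∈ Finset.range (n / m), X ^ (m * j)

theorem trPoly_mul (F : Type*) [Field F] (n m : ℕ) (h : m ∣ n) :
    (X ^ m - 1 : F[X]) * trPoly F n m = X ^ n - 1 := by
  have := mul_geom_sum (X ^ m : F[X]) (n / m)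
  simp_rw [← pow_mul] at this
  rw [trPoly, this, Nat.mul_div_cancel' h]

theorem trPoly_apply (F : Type*) [Field F] [Fintype F] (n m : ℕ) (x : AlgebraicClosure F) :
    aeval (frobEnd F) (trPoly F n m) x = trMap F n m x := by
  simp [trPoly, trMap, frobEnd_pow, LinearMap.sum_apply]

theorem Xpow_apply (F : Type*) [Field F] [Fintype F] (n : ℕ) (x : AlgebraicClosure F) :
    aeval (frobEnd F) (X ^ n - 1 : F[X]) x = 0 ↔ x ^ Fintype.card F ^ n = x := by
  simp [frobEnd_pow, sub_eq_zero]

/-- gcd of the two quotients is trivial -/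
theorem aux_syz {F : Type*} [Field F] (n a b : ℕ) (hn : n ≠ 0) (ha : a ∣ n) (hb : b ∣ n) (u v : F[X])
    (h : u * trPoly F n a = v * trPoly F n b) :
    ∃ c, u = c * trPoly F a (Nat.gcd a b) ∧ v = c * trPoly F b (Nat.gcd a b) := by
  classical
  have ha0 : a ≠ 0 := by rintro rfl; exact hn (zero_dvd_iff.1 ha)
  have hb0 : b ≠ 0 := by rintro rfl; exact hn (zero_dvd_iff.1 hb)
  have hne : ∀ k : ℕ, k ≠ 0 → (X ^ k - 1 : F[X]) ≠ 0 :=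
    fun k hk => (monic_X_pow_sub_C (1:F) hk).ne_zero
  have hg0 : Nat.gcd a b ≠ 0 := Nat.gcd_ne_zero_left ha0
  have e1 := trPoly_mul F n a ha
  have e2 := trPoly_mul F n b hb
  have e3 := trPoly_mul F a _ (Nat.gcd_dvd_left a b)
  have e4 := trPoly_mul F b _ (Nat.gcd_dvd_right a b)
  have h1 : u * trPoly F b (Nat.gcd a b) = v * trPoly F a (Nat.gcd a b) := by
    apply mul_left_cancel₀ (mul_ne_zero (hne _ hg0) (hne n hn))
    calc _ = (u * (X ^ n - 1)) * ((X ^ (Nat.gcd a b) - 1) * trPoly F b (Nat.gcd a b)) := by ring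
      _ = (u * trPoly F n a) * ((X ^ a - 1) * (X ^ b - 1)) := by rw [e4, ← e1]; ring
      _ = (v * ((X ^ b - 1) * trPoly F n b)) * (X ^ a - 1) := by rw [h]; ring
      _ = _ := by rw [e2, ← e3]; ring
  have hcop : IsCoprime (trPoly F a (Nat.gcd a b)) (trPoly F b (Nat.gcd a b)) := by
    have h2 : EuclideanDomain.gcd (X ^ a - 1 : F[X]) (X ^ b - 1) ∣ X ^ (Nat.gcd a b) - 1 :=
      aux_gcd _ _ _ (EuclideanDomain.gcd_dvd_left _ _) (EuclideanDomain.gcd_dvd_right _ _)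
    obtain ⟨w, hw⟩ := h2
    rw [EuclideanDomain.gcd_eq_gcd_ab] at hw
    set A := EuclideanDomain.gcdA (X ^ a - 1 : F[X]) (X ^ b - 1)
    set B := EuclideanDomain.gcdB (X ^ a - 1 : F[X]) (X ^ b - 1)
    refine ⟨A * w, B * w, ?_⟩
    apply mul_left_cancel₀ (hne _ hg0)
    rw [mul_one]
    conv_rhs => rw [hw, ← e3, ← e4]
    ring
  obtain ⟨c, hc⟩ : trPoly F a (Nat.gcd a b) ∣ u := by
    apply hcop.dvd_of_dvd_mul_right
    rw [h1]; exact dvd_mul_left _ _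
  have hta : trPoly F a (Nat.gcd a b) ≠ 0 := by
    intro h0; rw [h0, mul_zero] at e3; exact hne a ha0 e3.symm
  refine ⟨c, by rw [hc, mul_comm], ?_⟩
  apply mul_right_cancel₀ hta
  rw [← h1, hc]; ring

/-- **Theorem 9.** Let `n > 1`, let `d₁, …, d_k` be distinct divisors of `n` and let
`βᵢ ∈ F_{q^{dᵢ}}` satisfy the compatibility conditions
`Tr_{dᵢ/gcd(dᵢ,dⱼ)}(βᵢ) = Tr_{dⱼ/gcd(dᵢ,dⱼ)}(βⱼ)` for `i < j`. Then the number of `α ∈ F_{q^n}`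
with `Tr_{n/dᵢ}(α) = βᵢ` for all `i` equals `q^{n - λ(d₁, …, d_k)}`. -/
theorem prescribed_traces_count
    (F : Type*) [Field F] [Fintype F]
    (q : ℕ) (hq : q = Fintype.card F)
    (n : ℕ) (hn : 1 < n)
    {k : ℕ} (d : Fin k → ℕ) (hdvd : ∀ i, d i ∣ n) (hdist : Function.Injective d)
    (β : Fin k → AlgebraicClosure F) (hβ : ∀ i, β i ^ q ^ (d i) = β i)
    (hcomp : ∀ i j : Fin k, i < j →
      trMap F (d i) (Nat.gcd (d i) (d j)) (β i) = trMap F (d j) (Nat.gcd (d i) (d j)) (β j)) :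
    (Nat.card {α : AlgebraicClosure F //
        α ^ q ^ n = α ∧ ∀ i, trMap F n (d i) α = β i} : ℚ) =
      (q : ℚ) ^ ((n : ℤ) - lambdaSum d) := by
  subst hq
  classical
  have hn0 : n ≠ 0 := by omega
  have hd0 : ∀ i, d i ≠ 0 := fun i h => hn0 (zero_dvd_iff.1 (h ▸ hdvd i))
  have hne : ∀ k : ℕ, k ≠ 0 → (X ^ k - 1 : F[X]) ≠ 0 :=
    fun k hk => (monic_X_pow_sub_C (1:F) hk).ne_zero
  letI : Module F[X] (AlgebraicClosure F) :=
    Module.compHom (AlgebraicClosure F) (aeval (frobEnd F) : F[X] →ₐ[F] _).toRingHom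
  have hsm : ∀ (p : F[X]) (x : AlgebraicClosure F), p • x = aeval (frobEnd F) p x := fun _ _ => rfl
  have hcomp' : ∀ i j : Fin k,
      trMap F (d i) (Nat.gcd (d i) (d j)) (β i) = trMap F (d j) (Nat.gcd (d i) (d j)) (β j) := by
    intro i j
    rcases lt_trichotomy i j with h | h | h
    · exact hcomp i j h
    · rw [h]
    · rw [Nat.gcd_comm]; exact (hcomp j i h).symm
  have hβ' : ∀ i, (X ^ d i - 1 : F[X]) • β i = 0 := fun i => (Xpow_apply F _ _).2 (hβ i)
  obtain ⟨x₀, hx₀⟩ : ∃ x : AlgebraicClosure F, ∀ i : Option (Fin k),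
      (i.elim (X ^ n - 1 : F[X]) fun i => trPoly F n (d i)) • x = i.elim 0 β := by
    refine aux_exist (fun r hr m => frob_surj F r hr m) _ none (hne n hn0) _ ?_
    have key : ∀ (i : Fin k) (a b : F[X]), a * (X ^ n - 1) = b * trPoly F n (d i) → b • β i = 0 := by
      intro i a b h
      have ht : trPoly F n (d i) ≠ 0 := by
        intro h0
        have := trPoly_mul F n _ (hdvd i)
        rw [h0, mul_zero] at this
        exact hne n hn0 this.symm
      have : b = a * (X ^ d i - 1) := by
        apply mul_right_cancel₀ ht
        rw [← h, mul_assoc, trPoly_mul F n _ (hdvd i)]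
      rw [this, mul_smul, hβ' i, smul_zero]
    rintro (_ | i) (_ | j) a b h
    · simp
    · simpa using (key j a b h).symm
    · simpa using key i b a h.symm
    · obtain ⟨c, rfl, rfl⟩ := aux_syz n (d i) (d j) hn0 (hdvd i) (hdvd j) a b h
      simp only [Option.elim, mul_smul]
      congr 1
      rw [hsm, hsm, trPoly_apply, trPoly_apply]
      exact hcomp' i j
  obtain ⟨L, hL0, hL, hLd⟩ := aux_lcm (F := F) (Finset.univ : Finset (Fin k)) d hd0
  obtain ⟨Q, hQ⟩ : L ∣ X ^ n - 1 := (hL _).2 fun i _ => ⟨_, (trPoly_mul F n _ (hdvd i)).symm⟩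
  have hQ0 : Q ≠ 0 := by rintro rfl; rw [mul_zero] at hQ; exact hne n hn0 hQ
  have hQc : Q.coeff 0 ≠ 0 := by
    intro h
    have := congrArg (fun p => coeff p 0) hQ
    simp [mul_coeff_zero, h, hn0, coeff_one, coeff_X_pow, hn0.symm] at this
  have hker : ∀ x : AlgebraicClosure F,
      Q • x = 0 ↔ (X ^ n - 1 : F[X]) • x = 0 ∧ ∀ i, trPoly F n (d i) • x = 0 := by
    intro x
    constructor
    · intro h
      refine ⟨by rw [hQ, mul_smul, h, smul_zero], fun i => ?_⟩
      obtain ⟨z, hz⟩ := (hL L).1 dvd_rfl i (Finset.mem_univ i)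
      have : trPoly F n (d i) = z * Q := by
        apply mul_left_cancel₀ (hne _ (hd0 i))
        rw [trPoly_mul F n _ (hdvd i), ← mul_assoc, ← hz, hQ]
      rw [this, mul_smul, h, smul_zero]
    · rintro ⟨h1, h2⟩
      obtain ⟨r, hr⟩ := IsPrincipalIdealRing.principal (Ideal.torsionOf F[X] (AlgebraicClosure F) x)
      have hr' : ∀ p : F[X], p • x = 0 ↔ r ∣ p := by
        intro p
        rw [← Ideal.mem_torsionOf_iff, hr]
        exact Ideal.mem_span_singleton
      obtain ⟨m, hm⟩ := (hr' _).1 h1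
      have hr0 : r ≠ 0 := by rintro rfl; rw [zero_mul] at hm; exact hne n hn0 hm
      rw [hr']
      have hLm : L ∣ m := by
        rw [hL]
        intro i _
        obtain ⟨y, hy⟩ := (hr' _).1 (h2 i)
        refine ⟨y, mul_left_cancel₀ hr0 ?_⟩
        rw [← hm, ← trPoly_mul F n _ (hdvd i), hy]; ring
      obtain ⟨e, he⟩ := hLm
      refine ⟨e, mul_left_cancel₀ hL0 ?_⟩
      rw [← hQ, hm, he]; ring
  have hx1 : (X ^ n - 1 : F[X]) • x₀ = 0 := hx₀ none
  have hx2 : ∀ i, trPoly F n (d i) • x₀ = β i := fun i => hx₀ (some i)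
  have hcard : Nat.card {α : AlgebraicClosure F //
        α ^ Fintype.card F ^ n = α ∧ ∀ i, trMap F n (d i) α = β i} =
      Fintype.card F ^ Q.natDegree := by
    rw [← frob_ker F Q hQc]
    refine Nat.card_congr ((Equiv.subRight x₀).subtypeEquiv fun x => ?_)
    rw [← hsm, hker, Equiv.subRight_apply, smul_sub, hx1, sub_zero, hsm, Xpow_apply]
    refine and_congr_right fun _ => forall_congr' fun i => ?_
    rw [smul_sub, hx2, sub_eq_zero, hsm, trPoly_apply]
  have hdeg := congrArg natDegree hQ
  rw [natDegree_mul hL0 hQ0,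
    show (X ^ n - 1 : F[X]).natDegree = n from natDegree_X_pow_sub_C (r := (1:F))] at hdeg
  have : (n : ℤ) - lambdaSum d = (Q.natDegree : ℤ) := by
    rw [lambda_eq, ← hLd]; omega
  rw [this, hcard, zpow_natCast]
  push_cast
  rfl
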